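/- arXiv:1703.08872 — 2 statements merged into one kernel-verified Lean document; each statement's English description precedes it below -/
import Mathlib

section
/- (Exponential sum bound, tail estimate) Let d ≥ 1, β_j > 0, γ_j > 0, β'_j ≥ 0 for j = 1,…,d, set ρ := max_{1≤j≤d} γ_j/β_j, J := {j : γ_j/β_j = ρ}, d* := |J|, and β'* := Σ_{j∈J} β'_j. Then there exists a constant C > 0, depending only on β, γ, β', and d, such that for all L ≥ 0: Σ_{k ∈ ℕ^d : Σ_j (β_j+γ_j)k_j > L} exp(−Σ_j β_j k_j) ∏_{j=1}^d (k_j+1)^{β'_j} ≤ C exp(−L/(1+ρ)) (L+1)^{d*−1+β'*}. -/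
open scoped Classical

/-!
Put `θ = 1 / (1 + ρ)`. Then `β_j = θ (β_j + γ_j) + δ_j` with `δ_j ≥ 0`, and `δ_j = 0` exactly when
`j ∈ J`, so with `s = β + γ` the summand is `exp (-θ s·k) ∏_j exp (-δ_j k_j) (k_j + 1)^{β'_j}`.
Fix `i ∈ J` and cut `ℕ^d` into the slabs `n s_i ≤ s·k < (n + 1) s_i`. A point of a slab is
determined by its coordinates other than `i`. In the sum of `∏_j exp (-δ_j k_j) (k_j + 1)^{β'_j}`
over the `n`-th slab, the coordinate `i` therefore contributes only its largest possible value
`(n + 1)^{β'_i}`, each other `j ∈ J` contributes `O((n + 1)^{β'_j + 1})`, and each `j ∉ J` a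
convergent series. The slab sum is thus `O((n + 1)^{d* - 1 + β'*})`, and what remains is the tail
`n ≥ ⌊L / s_i⌋` of a one-dimensional series with geometric factor `exp (-θ s_i n)`.
-/

section ExpPolyWeight

/-- The one-dimensional summand `exp (-a k) (k + 1) ^ b` of the exponential sums below. -/
noncomputable def expPolyWeight (a b : ℝ) (k : ℕ) : ℝ :=
  Real.exp (-(a * k)) * ((k : ℝ) + 1) ^ b

lemma expPolyWeight_nonneg (a b : ℝ) (k : ℕ) : 0 ≤ expPolyWeight a b k := by
  unfold expPolyWeight
  positivity

lemma expPolyWeight_zero_left (b : ℝ) (k : ℕ) : expPolyWeight 0 b k = ((k : ℝ) + 1) ^ b := by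
  simp [expPolyWeight]

lemma prod_expPolyWeight {ι : Type*} [Fintype ι] (a b : ι → ℝ) (k : ι → ℕ) :
    ∏ j, expPolyWeight (a j) (b j) (k j) =
      Real.exp (-∑ j, a j * k j) * ∏ j, ((k j : ℝ) + 1) ^ b j := by
  simp only [expPolyWeight, Finset.prod_mul_distrib, ← Real.exp_sum, Finset.sum_neg_distrib]

lemma summable_expPolyWeight {a : ℝ} (ha : 0 < a) (b : ℝ) : Summable (expPolyWeight a b) := by
  have hshift : Filter.Tendsto (fun k : ℕ => (k : ℝ) + 1) Filter.atTop Filter.atTop :=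
    Filter.tendsto_atTop_add_const_right _ _ tendsto_natCast_atTop_atTop
  have hpow : (fun k : ℕ => ((k : ℝ) + 1) ^ b) =O[Filter.atTop]
      fun k : ℕ => Real.exp (a / 2 * (k + 1)) :=
    (isLittleO_rpow_exp_pos_mul_atTop b (half_pos ha)).isBigO.comp_tendsto hshift
  have hgeom : Summable fun k : ℕ => Real.exp (a / 2) * Real.exp (k * -(a / 2)) :=
    (Real.summable_exp_nat_mul_iff.2 (by linarith)).mul_left _
  refine summable_of_isBigO_nat hgeom
    (((Asymptotics.isBigO_refl (fun k : ℕ => Real.exp (-(a * k))) _).mul hpow).congr_right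
      fun k => ?_)
  rw [← Real.exp_add, ← Real.exp_add]
  congr 1
  ring

lemma expPolyWeight_add_le_mul (a : ℝ) {b : ℝ} (hb : 0 ≤ b) (m n : ℕ) :
    expPolyWeight a b (m + n) ≤ expPolyWeight a b m * expPolyWeight a b n := by
  have hmn : ((m + n : ℕ) : ℝ) + 1 ≤ (m + 1) * (n + 1) := by
    push_cast
    nlinarith [mul_nonneg m.cast_nonneg (α := ℝ) n.cast_nonneg]
  calc expPolyWeight a b (m + n)
      ≤ Real.exp (-(a * (m + n : ℕ))) * (((m : ℝ) + 1) * (n + 1)) ^ b := by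
        unfold expPolyWeight
        gcongr
    _ = expPolyWeight a b m * expPolyWeight a b n := by
        rw [Real.mul_rpow (by positivity) (by positivity), Nat.cast_add, mul_add, neg_add,
          Real.exp_add]
        unfold expPolyWeight
        ring

lemma sum_expPolyWeight_le_mul_tsum {a b : ℝ} (ha : 0 < a) (hb : 0 ≤ b) {N : ℕ} {T : Finset ℕ}
    (hT : ∀ n ∈ T, N ≤ n) :
    ∑ n ∈ T, expPolyWeight a b n ≤ expPolyWeight a b N * ∑' m, expPolyWeight a b m := by
  have hinj : Set.InjOn (· - N) (T : Set ℕ) := fun m hm n hn hmn =>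
    tsub_left_inj (hT m hm) (hT n hn) |>.1 hmn
  calc ∑ n ∈ T, expPolyWeight a b n
      ≤ ∑ n ∈ T, expPolyWeight a b N * expPolyWeight a b (n - N) :=
        Finset.sum_le_sum fun n hn => by
          simpa only [Nat.add_sub_cancel' (hT n hn)] using expPolyWeight_add_le_mul a hb N (n - N)
    _ = expPolyWeight a b N * ∑ m ∈ T.image (· - N), expPolyWeight a b m := by
        rw [Finset.sum_image hinj, Finset.mul_sum]
    _ ≤ expPolyWeight a b N * ∑' m, expPolyWeight a b m :=
        mul_le_mul_of_nonneg_left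
          ((summable_expPolyWeight ha b).sum_le_tsum _ fun m _ => expPolyWeight_nonneg a b m)
          (expPolyWeight_nonneg a b N)

lemma expPolyWeight_floor_div_le {a b s L : ℝ} (ha : 0 ≤ a) (hb : 0 ≤ b) (hs : 0 < s)
    (hL : 0 ≤ L) :
    expPolyWeight (a * s) b ⌊L / s⌋₊ ≤
      Real.exp (a * s) * (1 / s + 1) ^ b * (Real.exp (-(a * L)) * (L + 1) ^ b) := by
  have hfloor_le : (⌊L / s⌋₊ : ℝ) + 1 ≤ (1 / s + 1) * (L + 1) := by
    have hle : (⌊L / s⌋₊ : ℝ) ≤ 1 / s * L :=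
      (Nat.floor_le (div_nonneg hL hs.le)).trans_eq (one_div_mul_eq_div s L).symm
    have hs' : 0 < 1 / s := by positivity
    linarith
  have hlt_floor : L ≤ s * (⌊L / s⌋₊ + 1) :=
    ((div_lt_iff₀' hs).1 (Nat.lt_floor_add_one (L / s))).le
  calc expPolyWeight (a * s) b ⌊L / s⌋₊
      ≤ Real.exp (a * s + -(a * L)) * ((1 / s + 1) * (L + 1)) ^ b := by
        unfold expPolyWeight
        gcongr
        linarith [mul_le_mul_of_nonneg_left hlt_floor ha]
    _ = Real.exp (a * s) * (1 / s + 1) ^ b * (Real.exp (-(a * L)) * (L + 1) ^ b) := by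
        rw [Real.exp_add, Real.mul_rpow (by positivity) (by positivity)]
        ring

lemma sum_range_add_one_rpow_le {b : ℝ} (hb : 0 ≤ b) (N : ℕ) :
    ∑ k ∈ Finset.range N, ((k : ℝ) + 1) ^ b ≤ (N : ℝ) ^ (b + 1) := by
  calc ∑ k ∈ Finset.range N, ((k : ℝ) + 1) ^ b
      ≤ (Finset.range N).card • (N : ℝ) ^ b :=
        Finset.sum_le_card_nsmul _ _ _ fun k hk => by
          gcongr
          exact_mod_cast Finset.mem_range.1 hk
    _ = (N : ℝ) ^ (b + 1) := by
        rw [Finset.card_range, nsmul_eq_mul, Real.rpow_add_one' (by positivity) (by positivity),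
          mul_comm]

lemma exists_sum_range_expPolyWeight_le {δ b : ℝ} (hδ : 0 ≤ δ) (hb : δ = 0 → 0 ≤ b) (m : ℕ) :
    ∃ C, 0 ≤ C ∧ ∀ n : ℕ, ∑ k ∈ Finset.range (m * (n + 1)), expPolyWeight δ b k ≤
      C * ((n : ℝ) + 1) ^ (if δ = 0 then b + 1 else 0) := by
  rcases hδ.eq_or_lt' with rfl | hδ
  · refine ⟨(m : ℝ) ^ (b + 1), by positivity, fun n => ?_⟩
    simp only [expPolyWeight_zero_left, if_pos]
    refine (sum_range_add_one_rpow_le (hb rfl) _).trans_eq ?_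
    rw [← Real.mul_rpow (by positivity) (by positivity)]
    push_cast
    rfl
  · refine ⟨∑' k, expPolyWeight δ b k, tsum_nonneg (expPolyWeight_nonneg δ b), fun n => ?_⟩
    rw [if_neg hδ.ne', Real.rpow_zero, mul_one]
    exact (summable_expPolyWeight hδ b).sum_le_tsum _ fun k _ => expPolyWeight_nonneg δ b k

end ExpPolyWeight

lemma sum_prod_le_prod_sum_of_injOn {α κ β : Type*} [Fintype κ] {F : Finset α}
    {r : α → κ → β} {t : κ → Finset β} {w : κ → β → ℝ} (hr : Set.InjOn r F)
    (hrt : ∀ x ∈ F, ∀ j, r x j ∈ t j) (hw : ∀ j y, 0 ≤ w j y) :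
    ∑ x ∈ F, ∏ j, w j (r x j) ≤ ∏ j, ∑ y ∈ t j, w j y := by
  rw [Finset.prod_univ_sum, ← Finset.sum_image (f := fun y => ∏ j, w j (y j)) hr]
  refine Finset.sum_le_sum_of_subset_of_nonneg ?_ fun y _ _ =>
    Finset.prod_nonneg fun j _ => hw j _
  exact Finset.image_subset_iff.2 fun x hx => Fintype.mem_piFinset.2 (hrt x hx)

section Slab

variable {ι : Type*} [Fintype ι] {s : ι → ℝ}

/-- The index `n` of the slab `n * s i ≤ s · k < (n + 1) * s i` that contains `k`. The slabs are
given the width `s i` so that each of them meets a line parallel to the `i`-th axis at most once. -/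
noncomputable def slabIndex (s : ι → ℝ) (i : ι) (k : ι → ℕ) : ℕ :=
  ⌊(∑ j, s j * k j) / s i⌋₊

lemma slabIndex_eq_add (hs : ∀ j, 0 < s j) (i : ι) (k : ι → ℕ) :
    slabIndex s i k = k i + ⌊(∑ j : {j // j ≠ i}, s j * k j) / s i⌋₊ := by
  have hrest : 0 ≤ (∑ j : {j // j ≠ i}, s j * k j) / s i :=
    div_nonneg (Finset.sum_nonneg fun j _ => mul_nonneg (hs j).le (Nat.cast_nonneg _)) (hs i).le
  rw [slabIndex, Fintype.sum_eq_add_sum_subtype_ne _ i, add_div,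
    mul_div_cancel_left₀ _ (hs i).ne', add_comm, Nat.floor_add_natCast hrest, add_comm]

lemma injOn_restrict_ne_of_slabIndex_eq (hs : ∀ j, 0 < s j) (i : ι) (n : ℕ) :
    Set.InjOn (fun (k : ι → ℕ) (j : {j // j ≠ i}) => k j) {k | slabIndex s i k = n} := by
  intro k hk l hl hkl
  have hne : ∀ j : {j // j ≠ i}, k j = l j := congrFun hkl
  have hi : k i = l i := by
    have hslab : slabIndex s i k = slabIndex s i l := hk.trans hl.symm
    rw [slabIndex_eq_add hs, slabIndex_eq_add hs] at hslab
    simpa only [hne, add_left_inj] using hslab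
  funext j
  by_cases hj : j = i
  · exact hj ▸ hi
  · exact hne ⟨j, hj⟩

lemma mul_slabIndex_le (hs : ∀ j, 0 < s j) (i : ι) (k : ι → ℕ) :
    s i * slabIndex s i k ≤ ∑ j, s j * k j := by
  have hsum : 0 ≤ ∑ j, s j * k j :=
    Finset.sum_nonneg fun j _ => mul_nonneg (hs j).le (Nat.cast_nonneg _)
  exact (le_div_iff₀' (hs i)).1 (Nat.floor_le (div_nonneg hsum (hs i).le))

lemma lt_ceil_div_mul_slabIndex_add_one (hs : ∀ j, 0 < s j) (i j : ι) (k : ι → ℕ) :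
    k j < ⌈s i / s j⌉₊ * (slabIndex s i k + 1) := by
  have hsingle : s j * k j ≤ ∑ j, s j * k j :=
    Finset.single_le_sum (f := fun j => s j * (k j : ℝ))
      (fun j _ => mul_nonneg (hs j).le (Nat.cast_nonneg _)) (Finset.mem_univ j)
  have hslab : ∑ j, s j * k j < s i * (slabIndex s i k + 1) :=
    (div_lt_iff₀' (hs i)).1 (Nat.lt_floor_add_one _)
  have hlt : (k j : ℝ) < s i / s j * (slabIndex s i k + 1) := by
    rw [div_mul_eq_mul_div, lt_div_iff₀' (hs j)]
    exact hsingle.trans_lt hslab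
  have hceil : s i / s j * (slabIndex s i k + 1) ≤ ⌈s i / s j⌉₊ * (slabIndex s i k + 1) := by
    gcongr
    exact Nat.le_ceil _
  exact_mod_cast hlt.trans_le hceil

lemma sum_slab_prod_ne_le_prod_sum_range (hs : ∀ j, 0 < s j) {i : ι} {n : ℕ}
    {F : Finset (ι → ℕ)} (hF : ∀ k ∈ F, slabIndex s i k = n) {w : {j // j ≠ i} → ℕ → ℝ}
    (hw : ∀ j x, 0 ≤ w j x) :
    ∑ k ∈ F, ∏ j : {j // j ≠ i}, w j (k j) ≤
      ∏ j : {j // j ≠ i}, ∑ x ∈ Finset.range (⌈s i / s j⌉₊ * (n + 1)), w j x :=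
  sum_prod_le_prod_sum_of_injOn ((injOn_restrict_ne_of_slabIndex_eq hs i n).mono hF)
    (fun k hk j => Finset.mem_range.2 (hF k hk ▸ lt_ceil_div_mul_slabIndex_add_one hs i j k)) hw

variable {δ b : ι → ℝ}

/-- The exponent `d* - 1 + β'*` attached to the set `{j | δ j = 0}` of critical coordinates. -/
noncomputable def criticalExponent (δ b : ι → ℝ) : ℝ :=
  ((Finset.univ.filter fun j => δ j = 0).card : ℝ) - 1 +
    ∑ j ∈ Finset.univ.filter fun j => δ j = 0, b j

lemma criticalExponent_eq_add {i : ι} (hi : δ i = 0) :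
    criticalExponent δ b = b i + ∑ j : {j // j ≠ i}, if δ j = 0 then b j + 1 else 0 := by
  have hsum : criticalExponent δ b = (∑ j, if δ j = 0 then b j + 1 else 0) - 1 := by
    rw [criticalExponent, ← Finset.sum_filter, Finset.sum_add_distrib, Finset.sum_const,
      nsmul_one]
    ring
  rw [hsum, Fintype.sum_eq_add_sum_subtype_ne _ i, if_pos hi]
  ring

lemma criticalExponent_nonneg (hb : ∀ j, δ j = 0 → 0 ≤ b j) {i : ι} (hi : δ i = 0) :
    0 ≤ criticalExponent δ b := by
  rw [criticalExponent_eq_add hi]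
  refine add_nonneg (hb i hi) (Finset.sum_nonneg fun j _ => ?_)
  split_ifs with hj
  · exact add_nonneg (hb j hj) zero_le_one
  · exact le_rfl

lemma exists_sum_slab_prod_expPolyWeight_le (hs : ∀ j, 0 < s j) (hδ : ∀ j, 0 ≤ δ j)
    (hb : ∀ j, δ j = 0 → 0 ≤ b j) {i : ι} (hi : δ i = 0) :
    ∃ C, 0 ≤ C ∧ ∀ (n : ℕ) (F : Finset (ι → ℕ)), (∀ k ∈ F, slabIndex s i k = n) →
      ∑ k ∈ F, ∏ j, expPolyWeight (δ j) (b j) (k j) ≤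
        C * ((n : ℝ) + 1) ^ criticalExponent δ b := by
  choose C hC hbox using fun j : {j // j ≠ i} =>
    exists_sum_range_expPolyWeight_le (hδ j) (hb j) ⌈s i / s j⌉₊
  refine ⟨∏ j, C j, Finset.prod_nonneg fun j _ => hC j, fun n F hF => ?_⟩
  have hcoord : ∀ k ∈ F, expPolyWeight (δ i) (b i) (k i) ≤ ((n : ℝ) + 1) ^ b i := by
    intro k hk
    have hle : k i ≤ n := hF k hk ▸ slabIndex_eq_add hs i k ▸ Nat.le_add_right _ _
    rw [hi, expPolyWeight_zero_left]
    exact Real.rpow_le_rpow (by positivity) (by gcongr) (hb i hi)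
  calc ∑ k ∈ F, ∏ j, expPolyWeight (δ j) (b j) (k j)
      ≤ ∑ k ∈ F, ((n : ℝ) + 1) ^ b i *
          ∏ j : {j // j ≠ i}, expPolyWeight (δ j) (b j) (k j) :=
        Finset.sum_le_sum fun k hk => by
          rw [Fintype.prod_eq_mul_prod_subtype_ne _ i]
          exact mul_le_mul_of_nonneg_right (hcoord k hk)
            (Finset.prod_nonneg fun j _ => expPolyWeight_nonneg _ _ _)
    _ ≤ ((n : ℝ) + 1) ^ b i * ∏ j : {j // j ≠ i},
          (C j * ((n : ℝ) + 1) ^ (if δ j = 0 then b j + 1 else 0)) := by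
        rw [← Finset.mul_sum]
        gcongr
        exact (sum_slab_prod_ne_le_prod_sum_range hs hF fun j => expPolyWeight_nonneg _ _).trans
          (Finset.prod_le_prod
            (fun j _ => Finset.sum_nonneg fun x _ => expPolyWeight_nonneg _ _ _)
            fun j _ => hbox j n)
    _ = (∏ j, C j) * ((n : ℝ) + 1) ^ criticalExponent δ b := by
        rw [Finset.prod_mul_distrib, criticalExponent_eq_add hi, Real.rpow_add (by positivity),
          Real.rpow_sum_of_pos (by positivity)]
        ring

lemma prod_expPolyWeight_add (a : ι → ℝ) (k : ι → ℕ) :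
    ∏ j, expPolyWeight (a j + δ j) (b j) (k j) =
      Real.exp (-∑ j, a j * k j) * ∏ j, expPolyWeight (δ j) (b j) (k j) := by
  simp only [prod_expPolyWeight, add_mul, Finset.sum_add_distrib, neg_add, Real.exp_add,
    mul_assoc]

lemma prod_expPolyWeight_le_exp_slabIndex_mul (hs : ∀ j, 0 < s j) {θ : ℝ} (hθ : 0 ≤ θ) (i : ι)
    (k : ι → ℕ) :
    ∏ j, expPolyWeight (θ * s j + δ j) (b j) (k j) ≤
      Real.exp (-(θ * s i * slabIndex s i k)) * ∏ j, expPolyWeight (δ j) (b j) (k j) := by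
  rw [prod_expPolyWeight_add]
  refine mul_le_mul_of_nonneg_right ?_ (Finset.prod_nonneg fun j _ => expPolyWeight_nonneg _ _ _)
  simp only [mul_assoc, ← Finset.mul_sum]
  gcongr
  exact mul_slabIndex_le hs i k

lemma exists_sum_slab_prod_expPolyWeight_add_le (hs : ∀ j, 0 < s j) (hδ : ∀ j, 0 ≤ δ j)
    (hb : ∀ j, δ j = 0 → 0 ≤ b j) {i : ι} (hi : δ i = 0) {θ : ℝ} (hθ : 0 ≤ θ) :
    ∃ C, 0 ≤ C ∧ ∀ (n : ℕ) (F : Finset (ι → ℕ)), (∀ k ∈ F, slabIndex s i k = n) →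
      ∑ k ∈ F, ∏ j, expPolyWeight (θ * s j + δ j) (b j) (k j) ≤
        C * expPolyWeight (θ * s i) (criticalExponent δ b) n := by
  obtain ⟨C, hC, hslab⟩ := exists_sum_slab_prod_expPolyWeight_le hs hδ hb hi
  refine ⟨C, hC, fun n F hF => ?_⟩
  calc ∑ k ∈ F, ∏ j, expPolyWeight (θ * s j + δ j) (b j) (k j)
      ≤ ∑ k ∈ F, Real.exp (-(θ * s i * n)) * ∏ j, expPolyWeight (δ j) (b j) (k j) :=
        Finset.sum_le_sum fun k hk => hF k hk ▸ prod_expPolyWeight_le_exp_slabIndex_mul hs hθ i k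
    _ ≤ Real.exp (-(θ * s i * n)) * (C * ((n : ℝ) + 1) ^ criticalExponent δ b) := by
        rw [← Finset.mul_sum]
        gcongr
        exact hslab n F hF
    _ = C * expPolyWeight (θ * s i) (criticalExponent δ b) n := mul_left_comm _ _ _

lemma exists_sum_prod_expPolyWeight_le_of_lt (hs : ∀ j, 0 < s j) (hδ : ∀ j, 0 ≤ δ j)
    (hb : ∀ j, δ j = 0 → 0 ≤ b j) {i : ι} (hi : δ i = 0) {θ : ℝ} (hθ : 0 < θ) :
    ∃ C, 0 ≤ C ∧ ∀ L, 0 ≤ L → ∀ F : Finset (ι → ℕ), (∀ k ∈ F, L < ∑ j, s j * k j) →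
      ∑ k ∈ F, ∏ j, expPolyWeight (θ * s j + δ j) (b j) (k j) ≤
        C * (Real.exp (-(θ * L)) * (L + 1) ^ criticalExponent δ b) := by
  obtain ⟨C, hC, hslab⟩ := exists_sum_slab_prod_expPolyWeight_add_le hs hδ hb hi hθ.le
  set q := criticalExponent δ b
  have hq : 0 ≤ q := criticalExponent_nonneg hb hi
  have hθs : 0 < θ * s i := mul_pos hθ (hs i)
  set S := ∑' m, expPolyWeight (θ * s i) q m
  have hS : 0 ≤ S := tsum_nonneg (expPolyWeight_nonneg _ _)
  refine ⟨C * (Real.exp (θ * s i) * (1 / s i + 1) ^ q * S), ?_, fun L hL F hF => ?_⟩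
  · have hsi := hs i
    positivity
  have hindex : ∀ n ∈ F.image (slabIndex s i), ⌊L / s i⌋₊ ≤ n :=
    Finset.forall_mem_image.2 fun k hk =>
      Nat.floor_le_floor (div_le_div_of_nonneg_right (hF k hk).le (hs i).le)
  calc ∑ k ∈ F, ∏ j, expPolyWeight (θ * s j + δ j) (b j) (k j)
      = ∑ n ∈ F.image (slabIndex s i), ∑ k ∈ F with slabIndex s i k = n,
          ∏ j, expPolyWeight (θ * s j + δ j) (b j) (k j) :=
        (Finset.sum_fiberwise_of_maps_to (fun k hk => Finset.mem_image_of_mem _ hk) _).symm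
    _ ≤ C * ∑ n ∈ F.image (slabIndex s i), expPolyWeight (θ * s i) q n := by
        rw [Finset.mul_sum]
        exact Finset.sum_le_sum fun n _ => hslab n _ fun k hk => (Finset.mem_filter.1 hk).2
    _ ≤ C * (Real.exp (θ * s i) * (1 / s i + 1) ^ q *
          (Real.exp (-(θ * L)) * (L + 1) ^ q) * S) := by
        gcongr
        refine (sum_expPolyWeight_le_mul_tsum hθs hq hindex).trans ?_
        exact mul_le_mul_of_nonneg_right (expPolyWeight_floor_div_le hθ.le hq (hs i) hL) hS
    _ = C * (Real.exp (θ * s i) * (1 / s i + 1) ^ q * S) *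
          (Real.exp (-(θ * L)) * (L + 1) ^ q) := by ring

end Slab

lemma summable_and_tsum_le_of_sum_le {α : Type*} {f : α → ℝ} {c : ℝ} (hf : 0 ≤ f)
    (h : ∀ F : Finset α, ∑ x ∈ F, f x ≤ c) : Summable f ∧ ∑' x, f x ≤ c :=
  ⟨summable_of_sum_le hf h, Real.tsum_le_of_sum_le hf h⟩

lemma exists_slack {β γ ρ : ℝ} (hβ : 0 < β) (hρ : -1 < ρ) (hγ : γ / β ≤ ρ) :
    ∃ δ, 0 ≤ δ ∧ δ < β ∧ (δ = 0 ↔ γ / β = ρ) ∧ β + γ ≤ (1 + ρ) * (β - δ) := by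
  have hρ' : 0 < 1 + ρ := by linarith
  rcases hγ.eq_or_lt with heq | hlt
  · refine ⟨0, le_rfl, hβ, iff_of_true rfl heq, ?_⟩
    rw [div_eq_iff hβ.ne'] at heq
    linarith
  · have hpos : 0 < min (β / 2) ((ρ * β - γ) / (1 + ρ)) :=
      lt_min (half_pos hβ) (div_pos (sub_pos.2 ((div_lt_iff₀ hβ).1 hlt)) hρ')
    have hle := (le_div_iff₀' hρ').1 (min_le_right (β / 2) ((ρ * β - γ) / (1 + ρ)))
    exact ⟨_, hpos.le, (min_le_left _ _).trans_lt (half_lt_self hβ),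
      iff_of_false hpos.ne' hlt.ne, by linarith⟩

theorem exponential_sum_tail_bound_general {ι : Type*} [Fintype ι] (β γ β' : ι → ℝ)
    (hβ : ∀ j, 0 < β j) (ρ : ℝ) (hρ : -1 < ρ) (hρmem : ∃ j, γ j / β j = ρ)
    (hρub : ∀ j, γ j / β j ≤ ρ) (hβ' : ∀ j, γ j / β j = ρ → 0 ≤ β' j) :
    ∃ C > (0 : ℝ), ∀ L : ℝ, 0 ≤ L →
      Summable (fun k : ι → ℕ =>
        if L < ∑ j, (β j + γ j) * (k j : ℝ)
        then Real.exp (-∑ j, β j * (k j : ℝ)) * ∏ j, ((k j : ℝ) + 1) ^ (β' j)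
        else 0) ∧
      (∑' k : ι → ℕ,
        if L < ∑ j, (β j + γ j) * (k j : ℝ)
        then Real.exp (-∑ j, β j * (k j : ℝ)) * ∏ j, ((k j : ℝ) + 1) ^ (β' j)
        else 0) ≤
      C * Real.exp (-L / (1 + ρ)) *
        (L + 1) ^
          (((Finset.univ.filter fun j => γ j / β j = ρ).card : ℝ) - 1 +
            ∑ j ∈ Finset.univ.filter fun j => γ j / β j = ρ, β' j) := by
  have hρ' : 0 < 1 + ρ := by linarith
  choose δ hδ hδβ hcrit hle using fun j => exists_slack (hβ j) hρ (hρub j)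
  obtain ⟨i, hi⟩ := hρmem
  -- If `β j + γ j` is small or negative, then `s j` exceeds it; this only enlarges the region of
  -- summation and keeps the slabs bounded.
  set s : ι → ℝ := fun j => (1 + ρ) * (β j - δ j)
  have hs : ∀ j, 0 < s j := fun j => mul_pos hρ' (sub_pos.2 (hδβ j))
  have hsplit : ∀ j, (1 + ρ)⁻¹ * s j + δ j = β j := fun j => by
    rw [inv_mul_cancel_left₀ hρ'.ne', sub_add_cancel]
  obtain ⟨C, hC, hbound⟩ := exists_sum_prod_expPolyWeight_le_of_lt (b := β') hs hδ
    (fun j hj => hβ' j ((hcrit j).1 hj)) ((hcrit i).2 hi) (inv_pos.2 hρ')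
  simp only [hsplit, prod_expPolyWeight, criticalExponent, hcrit] at hbound
  refine ⟨C + 1, by positivity, fun L hL => ?_⟩
  refine summable_and_tsum_le_of_sum_le (fun k => ?_) fun F => ?_
  · dsimp only [Pi.zero_apply]
    split_ifs <;> positivity
  · rw [← Finset.sum_filter]
    refine (hbound L hL _ fun k hk => ?_).trans ?_
    · refine (Finset.mem_filter.1 hk).2.trans_le (Finset.sum_le_sum fun j _ => ?_)
      exact mul_le_mul_of_nonneg_right (hle j) (Nat.cast_nonneg _)
    · rw [← mul_assoc, inv_mul_eq_div, ← neg_div]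
      gcongr
      linarith

/-- exponential sum bound, tail estimate: with
`ρ = max_j γ_j/β_j`, `J = {j : γ_j/β_j = ρ}`, `d* = |J|`, `β'* = ∑_{j∈J} β'_j`,
there is `C = C(β,γ,β',d) > 0` such that for every `L ≥ 0`
`∑_{(β+γ)·k > L} exp(-β·k) ∏_j (k_j+1)^{β'_j} ≤ C exp(-L/(1+ρ)) (L+1)^{d*-1+β'*}`. -/
theorem exponential_sum_tail_bound
    {d : ℕ} (hd : 1 ≤ d) (β γ β' : Fin d → ℝ)
    (hβ : ∀ j, 0 < β j) (hγ : ∀ j, 0 < γ j) (hβ' : ∀ j, 0 ≤ β' j)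
    (ρ : ℝ) (hρmem : ∃ j, γ j / β j = ρ) (hρub : ∀ j, γ j / β j ≤ ρ) :
    ∃ C > (0 : ℝ), ∀ L : ℝ, 0 ≤ L →
      (∑' k : Fin d → ℕ,
        if L < ∑ j, (β j + γ j) * (k j : ℝ)
        then Real.exp (-∑ j, β j * (k j : ℝ)) * ∏ j, ((k j : ℝ) + 1) ^ (β' j)
        else 0) ≤
      C * Real.exp (-L / (1 + ρ)) *
        (L + 1) ^
          (((Finset.univ.filter fun j => γ j / β j = ρ).card : ℝ) - 1 +
            ∑ j ∈ Finset.univ.filter fun j => γ j / β j = ρ, β' j) := by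
  have hρ : -1 < ρ := by
    obtain ⟨j, rfl⟩ := hρmem
    linarith [div_pos (hγ j) (hβ j)]
  obtain ⟨C, hC, hbound⟩ := exponential_sum_tail_bound_general β γ β' hβ ρ hρ hρmem hρub
    fun j _ => hβ' j
  exact ⟨C, hC, fun L hL => (hbound L hL).2⟩
end

section
/- (Error bound for Smolyak's algorithm with simplex-type sets) Let Y be a Banach space and M : ℕ^d → Y satisfy ‖(Δ_mix M)(k)‖_Y ≤ ∏_{j=1}^d K_{j,1} exp(−β_j k_j)(k_j+1)^{β'_j} for all k ∈ ℕ^d, with K_{j,1} > 0, β_j > 0, β'_j ≥ 0. Let γ_j > 0, set ρ := max_j γ_j/β_j, J := {j : γ_j/β_j = ρ}, d* := |J|, β'* := Σ_{j∈J} β'_j, K₁ := ∏_j K_{j,1}, and for L > 0 let I_L := {k ∈ ℕ^d : Σ_j (β_j+γ_j)k_j ≤ L}. Let M_∞ := Σ_{k∈ℕ^d} (Δ_mix M)(k) (this sum converges absolutely). Then there is a constant C > 0, depending only on β, γ, β', and d, such that for all L > 0: ‖S_{I_L}(M) − M_∞‖_Y ≤ K₁ C exp(−L/(1+ρ)) (L+1)^{d*−1+β'*}.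 -/
open scoped Classical

/-- The `j`-th unidirectional difference operator:
`(Δ_j M)(k) = M(k) - M(k - e_j)` if `k j > 0`, and `(Δ_j M)(k) = M(k)` if `k j = 0`. -/
def diffOp {d : ℕ} {Y : Type*} [AddCommGroup Y] (j : Fin d) (M : (Fin d → ℕ) → Y) :
    (Fin d → ℕ) → Y :=
  fun k => if k j = 0 then M k else M k - M (Function.update k j (k j - 1))

/-- The mixed difference operator `Δ_mix = Δ_1 ∘ ⋯ ∘ Δ_d`. -/
def mixDiff {d : ℕ} {Y : Type*} [AddCommGroup Y] (M : (Fin d → ℕ) → Y) :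
    (Fin d → ℕ) → Y :=
  (List.finRange d).foldr (fun j F => diffOp j F) M

/-!
Write `w j = β j + γ j` and `β j = w j / (1 + ρ) + δ j`; then `δ j ≥ 0`, with equality exactly for
`j ∈ J`. Fix `i ∈ J` and cut the complement of the simplex into the shells
`L + w i * n ≤ ∑ j, w j * k j < L + w i * (n + 1)`. On the `n`-th shell the factors
`exp (-w j * k j / (1 + ρ))` multiply to at most `exp (-(L + w i * n) / (1 + ρ))`. The shell has
width `w i`, so its points are determined by their coordinates other than `i`, and all their
coordinates are `O((L + 1) * (n + 1))`. Hence the coordinate `i` contributes a power `β' i`, every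
other `j ∈ J` a power `β' j + 1`, and the coordinates outside `J`, which are damped by
`exp (-δ j * k j)`, only constants. The remaining series over `n` converges geometrically.
-/

theorem summable_exp_neg_mul_add_one_rpow {c : ℝ} (hc : 0 < c) (p : ℝ) :
    Summable fun n : ℕ => Real.exp (-c * n) * ((n : ℝ) + 1) ^ p := by
  have h := ((summable_nat_add_iff 1).2
    (Real.summable_pow_mul_exp_neg_nat_mul ⌈p⌉₊ hc)).mul_left (Real.exp c)
  refine Summable.of_nonneg_of_le (fun n => by positivity) (fun n => ?_) h
  have hpow : ((n : ℝ) + 1) ^ p ≤ ((n : ℝ) + 1) ^ ⌈p⌉₊ := by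
    rw [← Real.rpow_natCast]
    exact Real.rpow_le_rpow_of_exponent_le (by linarith [n.cast_nonneg (α := ℝ)]) (Nat.le_ceil p)
  calc Real.exp (-c * n) * ((n : ℝ) + 1) ^ p
      ≤ Real.exp (-c * n) * ((n : ℝ) + 1) ^ ⌈p⌉₊ := by gcongr
    _ = Real.exp c * (((n + 1 : ℕ) : ℝ) ^ ⌈p⌉₊ * Real.exp (-c * (n + 1 : ℕ))) := by
        rw [mul_left_comm, ← Real.exp_add, mul_comm]
        push_cast
        ring_nf

theorem exists_sum_range_floor_exp_neg_mul_rpow_le {δ p : ℝ} (hδ : 0 ≤ δ) (hp : 0 ≤ p) :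
    ∃ C > (0 : ℝ), ∀ x : ℝ, 0 < x →
      ∑ n ∈ Finset.range ⌊x⌋₊, Real.exp (-δ * n) * ((n : ℝ) + 1) ^ p ≤
        C * x ^ (if δ = 0 then p + 1 else 0) := by
  obtain rfl | hδ := hδ.eq_or_lt
  · refine ⟨1, one_pos, fun x hx => ?_⟩
    have hterm : ∀ n ∈ Finset.range ⌊x⌋₊, Real.exp (-0 * n) * ((n : ℝ) + 1) ^ p ≤ x ^ p := by
      intro n hn
      have hnx : ((n + 1 : ℕ) : ℝ) ≤ x :=
        (Nat.le_floor_iff hx.le).1 (Nat.succ_le_of_lt (Finset.mem_range.1 hn))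
      rw [neg_zero, zero_mul, Real.exp_zero, one_mul]
      gcongr
      exact_mod_cast hnx
    calc _ ≤ (⌊x⌋₊ : ℝ) * x ^ p := by simpa using Finset.sum_le_sum hterm
      _ ≤ x * x ^ p := by gcongr; exact Nat.floor_le hx.le
      _ = _ := by rw [if_pos rfl, one_mul, Real.rpow_add_one hx.ne', mul_comm]
  · have hsum := summable_exp_neg_mul_add_one_rpow hδ p
    refine ⟨_, hsum.tsum_pos (fun n => by positivity) 0 (by positivity), fun x _ => ?_⟩
    rw [if_neg hδ.ne', Real.rpow_zero, mul_one]
    exact hsum.sum_le_tsum _ fun n _ => by positivity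

theorem norm_sum_sub_le_of_hasSum {α E : Type*} [SeminormedAddCommGroup E] {u : α → E} {a : E}
    (hu : HasSum u a) (I : Finset α) {B : ℝ}
    (hB : ∀ S : Finset α, Disjoint I S → ∑ k ∈ S, ‖u k‖ ≤ B) :
    ‖∑ k ∈ I, u k - a‖ ≤ B := by
  rw [norm_sub_rev]
  refine le_of_tendsto (hu.sub_const _).norm ?_
  filter_upwards [Filter.eventually_ge_atTop I] with S hS
  rw [← Finset.sum_sdiff hS, add_sub_cancel_right]
  exact (norm_sum_le _ _).trans (hB _ Finset.disjoint_sdiff)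

theorem mem_Ico_of_floor_sub_div_eq {L h s : ℝ} (hh : 0 < h) (hs : L ≤ s) {n : ℕ}
    (hn : ⌊(s - L) / h⌋₊ = n) : s ∈ Set.Ico (L + h * n) (L + h * n + h) := by
  obtain ⟨hle, hlt⟩ := (Nat.floor_eq_iff (div_nonneg (sub_nonneg.2 hs) hh.le)).1 hn
  rw [le_div_iff₀ hh] at hle
  rw [div_lt_iff₀ hh] at hlt
  constructor <;> linarith

section Simplex

variable {ι : Type*} [Fintype ι]

theorem sum_prod_le_mul_prod_sum_of_injOn_restrict [DecidableEq ι] {κ : Type*} {f : ι → κ → ℝ}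
    (hf : ∀ j n, 0 ≤ f j n) {S : Finset (ι → κ)} {T : Finset κ} (hST : ∀ k ∈ S, ∀ j, k j ∈ T)
    (i : ι) (hinj : Set.InjOn (Subtype.restrict (· ≠ i)) (S : Set (ι → κ)))
    {A : ℝ} (hA : 0 ≤ A) (hfA : ∀ n ∈ T, f i n ≤ A) :
    ∑ k ∈ S, ∏ j, f j (k j) ≤ A * ∏ j : {j // j ≠ i}, ∑ n ∈ T, f j n := by
  have hprod : ∀ k : {j // j ≠ i} → κ, 0 ≤ ∏ j : {j // j ≠ i}, f j (k j) :=
    fun k => Finset.prod_nonneg fun j _ => hf j _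
  calc ∑ k ∈ S, ∏ j, f j (k j)
      ≤ ∑ k ∈ S, A * ∏ j : {j // j ≠ i}, f j (Subtype.restrict (· ≠ i) k j) := by
        refine Finset.sum_le_sum fun k hk => ?_
        rw [Fintype.prod_eq_mul_prod_subtype_ne _ i]
        exact mul_le_mul_of_nonneg_right (hfA _ (hST k hk i)) (hprod _)
    _ = A * ∑ k ∈ S.image (Subtype.restrict (· ≠ i)), ∏ j : {j // j ≠ i}, f j (k j) := by
        rw [← Finset.mul_sum, Finset.sum_image hinj]
    _ ≤ A * ∑ k ∈ Fintype.piFinset fun _ : {j // j ≠ i} => T, ∏ j : {j // j ≠ i}, f j (k j) := by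
        gcongr
        · exact fun k _ _ => hprod k
        · refine Finset.image_subset_iff.2 fun k hk => ?_
          exact Fintype.mem_piFinset.2 fun j => hST k hk j
    _ = A * ∏ j : {j // j ≠ i}, ∑ n ∈ T, f j n := by rw [Finset.prod_univ_sum]

variable {w : ι → ℝ}

theorem injOn_restrict_shell {i : ι} (hi : 0 < w i) (t : ℝ) :
    Set.InjOn (Subtype.restrict (· ≠ i))
      {k : ι → ℕ | ∑ j, w j * (k j : ℝ) ∈ Set.Ico t (t + w i)} := by
  intro k ⟨hk, hk'⟩ l ⟨hl, hl'⟩ hkl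
  have hne : ∀ j : {j // j ≠ i}, k j = l j := congrFun hkl
  rw [Fintype.sum_eq_add_sum_subtype_ne _ i] at hk hk' hl hl'
  simp only [hne] at hk hk'
  have hlt : (k i : ℝ) < l i + 1 := by nlinarith
  have hgt : (l i : ℝ) < k i + 1 := by nlinarith
  have heq : k i = l i := by
    norm_cast at hlt hgt
    omega
  funext j
  obtain rfl | hj := eq_or_ne j i
  exacts [heq, hne ⟨j, hj⟩]

theorem natCast_le_div_of_sum_mul_le (hw : ∀ j, 0 < w j) {R : ℝ} {k : ι → ℕ}
    (hk : ∑ j, w j * (k j : ℝ) ≤ R) (j : ι) : (k j : ℝ) ≤ R / w j := by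
  rw [le_div_iff₀' (hw j)]
  refine le_trans ?_ hk
  exact Finset.single_le_sum (f := fun j => w j * (k j : ℝ))
    (fun i _ => mul_nonneg (hw i).le (Nat.cast_nonneg _)) (Finset.mem_univ j)

theorem finite_setOf_sum_mul_natCast_le (hw : ∀ j, 0 < w j) (L : ℝ) :
    {k : ι → ℕ | ∑ j, w j * (k j : ℝ) ≤ L}.Finite :=
  (Set.finite_Icc 0 fun j => ⌊L / w j⌋₊).subset fun _ hk =>
    ⟨zero_le, fun j => Nat.le_floor (natCast_le_div_of_sum_mul_le hw hk j)⟩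

theorem natCast_add_one_le_of_sum_mul_le (hw : ∀ j, 0 < w j) {R : ℝ} (hR : 1 ≤ R) {k : ι → ℕ}
    (hk : ∑ j, w j * (k j : ℝ) ≤ R) (j : ι) : (k j : ℝ) + 1 ≤ (∑ i, (w i)⁻¹ + 1) * R := by
  have hinv : (w j)⁻¹ ≤ ∑ i, (w i)⁻¹ :=
    Finset.single_le_sum (f := fun i => (w i)⁻¹) (fun i _ => (inv_pos.2 (hw i)).le)
      (Finset.mem_univ j)
  calc (k j : ℝ) + 1 ≤ (w j)⁻¹ * R + R := by
        have := natCast_le_div_of_sum_mul_le hw hk j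
        rw [div_eq_inv_mul] at this
        linarith
    _ ≤ (∑ i, (w i)⁻¹) * R + R := by gcongr
    _ = _ := by ring

variable {δ p : ι → ℝ} {i : ι}

theorem sum_filter_add_one_sub_one_eq [DecidableEq ι] (hi : δ i = 0) :
    ∑ j with δ j = 0, (p j + 1) - 1 =
      p i + ∑ j : {j // j ≠ i}, if δ j = 0 then p j + 1 else 0 := by
  rw [Finset.sum_filter, Fintype.sum_eq_add_sum_subtype_ne _ i, if_pos hi]
  ring

theorem sum_filter_add_one_sub_one_nonneg (hp : ∀ j, 0 ≤ p j) (hi : δ i = 0) :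
    0 ≤ ∑ j with δ j = 0, (p j + 1) - 1 := by
  rw [sum_filter_add_one_sub_one_eq hi]
  refine add_nonneg (hp i) (Finset.sum_nonneg fun j _ => ?_)
  split_ifs
  exacts [add_nonneg (hp j) zero_le_one, le_rfl]

theorem exists_sum_le_rpow_of_injOn_restrict (hδ : ∀ j, 0 ≤ δ j) (hp : ∀ j, 0 ≤ p j)
    (hi : δ i = 0) :
    ∃ C > (0 : ℝ), ∀ x : ℝ, 0 < x → ∀ S : Finset (ι → ℕ), (∀ k ∈ S, ∀ j, (k j : ℝ) + 1 ≤ x) →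
      Set.InjOn (Subtype.restrict (· ≠ i)) (S : Set (ι → ℕ)) →
      ∑ k ∈ S, ∏ j, Real.exp (-δ j * k j) * ((k j : ℝ) + 1) ^ p j ≤
        C * x ^ (∑ j with δ j = 0, (p j + 1) - 1) := by
  choose D hD hsum using fun j => exists_sum_range_floor_exp_neg_mul_rpow_le (hδ j) (hp j)
  refine ⟨∏ j : {j // j ≠ i}, D j, Finset.prod_pos fun j _ => hD j, fun x hx S hSx hinj => ?_⟩
  have hrange : ∀ k ∈ S, ∀ j, k j ∈ Finset.range ⌊x⌋₊ := fun k hk j =>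
    Finset.mem_range.2 (Nat.le_floor (by exact_mod_cast hSx k hk j))
  have hpow : ∀ n ∈ Finset.range ⌊x⌋₊, Real.exp (-δ i * n) * ((n : ℝ) + 1) ^ p i ≤ x ^ p i := by
    intro n hn
    have hnx : ((n + 1 : ℕ) : ℝ) ≤ x := (Nat.le_floor_iff hx.le).1 (Finset.mem_range.1 hn)
    rw [hi, neg_zero, zero_mul, Real.exp_zero, one_mul]
    exact Real.rpow_le_rpow (by positivity) (by exact_mod_cast hnx) (hp i)
  calc _ ≤ x ^ p i * ∏ j : {j // j ≠ i}, ∑ n ∈ Finset.range ⌊x⌋₊,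
          Real.exp (-δ j * n) * ((n : ℝ) + 1) ^ p j :=
        sum_prod_le_mul_prod_sum_of_injOn_restrict
          (f := fun j (n : ℕ) => Real.exp (-δ j * n) * ((n : ℝ) + 1) ^ p j)
          (fun j n => by positivity) hrange i hinj (by positivity) hpow
    _ ≤ x ^ p i * ∏ j : {j // j ≠ i}, D j * x ^ (if δ j = 0 then p j + 1 else 0) := by
        gcongr with j
        exact hsum j x hx
    _ = _ := by
        rw [Finset.prod_mul_distrib, ← Real.rpow_sum_of_pos hx,
          sum_filter_add_one_sub_one_eq hi, Real.rpow_add hx]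
        ring

theorem exists_sum_shell_le (hw : ∀ j, 0 < w j) (hδ : ∀ j, 0 ≤ δ j) (hp : ∀ j, 0 ≤ p j)
    (hi : δ i = 0) :
    ∃ C > (0 : ℝ), ∀ t : ℝ, 0 ≤ t → ∀ S : Finset (ι → ℕ),
      (∀ k ∈ S, ∑ j, w j * (k j : ℝ) ∈ Set.Ico t (t + w i)) →
      ∑ k ∈ S, ∏ j, Real.exp (-δ j * k j) * ((k j : ℝ) + 1) ^ p j ≤
        C * (t + 1) ^ (∑ j with δ j = 0, (p j + 1) - 1) := by
  obtain ⟨D, hD, hsum⟩ := exists_sum_le_rpow_of_injOn_restrict hδ hp hi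
  have hwi := hw i
  set A : ℝ := (∑ j, (w j)⁻¹ + 1) * (1 + w i)
  have hA : 0 < A := by
    have hinv : 0 ≤ ∑ j, (w j)⁻¹ := Finset.sum_nonneg fun j _ => (inv_pos.2 (hw j)).le
    positivity
  refine ⟨D * A ^ (∑ j with δ j = 0, (p j + 1) - 1), by positivity, fun t ht S hS => ?_⟩
  rw [mul_assoc, ← Real.mul_rpow hA.le (by positivity)]
  refine hsum _ (by positivity) S (fun k hk j => ?_)
    ((injOn_restrict_shell hwi t).mono fun k hk => hS k hk)
  have hR : t + w i ≤ (1 + w i) * (t + 1) := by nlinarith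
  rw [mul_assoc]
  exact natCast_add_one_le_of_sum_mul_le hw (by nlinarith) ((hS k hk).2.le.trans hR) j

theorem prod_exp_neg_mul_rpow_eq (a : ℝ) (k : ι → ℕ) :
    ∏ j, Real.exp (-(a * w j + δ j) * k j) * ((k j : ℝ) + 1) ^ p j =
      Real.exp (-a * ∑ j, w j * (k j : ℝ)) *
        ∏ j, Real.exp (-δ j * k j) * ((k j : ℝ) + 1) ^ p j := by
  rw [Finset.mul_sum, Real.exp_sum, ← Finset.prod_mul_distrib]
  refine Finset.prod_congr rfl fun j _ => ?_
  rw [← mul_assoc, ← Real.exp_add]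
  ring_nf

theorem exists_sum_exp_shell_le {a : ℝ} (ha : 0 ≤ a) (hw : ∀ j, 0 < w j) (hδ : ∀ j, 0 ≤ δ j)
    (hp : ∀ j, 0 ≤ p j) (hi : δ i = 0) :
    ∃ C > (0 : ℝ), ∀ L : ℝ, 0 ≤ L → ∀ (n : ℕ) (S : Finset (ι → ℕ)),
      (∀ k ∈ S, ∑ j, w j * (k j : ℝ) ∈ Set.Ico (L + w i * n) (L + w i * n + w i)) →
      ∑ k ∈ S, ∏ j, Real.exp (-(a * w j + δ j) * k j) * ((k j : ℝ) + 1) ^ p j ≤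
        C * Real.exp (-a * L) * (L + 1) ^ (∑ j with δ j = 0, (p j + 1) - 1) *
          (Real.exp (-(a * w i) * n) * ((n : ℝ) + 1) ^ (∑ j with δ j = 0, (p j + 1) - 1)) := by
  obtain ⟨D, hD, hshell⟩ := exists_sum_shell_le hw hδ hp hi
  have hQ := sum_filter_add_one_sub_one_nonneg hp hi
  set Q : ℝ := ∑ j with δ j = 0, (p j + 1) - 1
  have hwi := hw i
  refine ⟨D * (1 + w i) ^ Q, by positivity, fun L hL n S hS => ?_⟩
  have hbase : L + w i * n + 1 ≤ (1 + w i) * (L + 1) * (n + 1) := by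
    have : 0 ≤ L * w i + L * n + w i * L * n + w i + n := by positivity
    linarith
  calc _ ≤ ∑ k ∈ S, Real.exp (-a * (L + w i * n)) *
          ∏ j, Real.exp (-δ j * k j) * ((k j : ℝ) + 1) ^ p j := by
        refine Finset.sum_le_sum fun k hk => ?_
        simp only [prod_exp_neg_mul_rpow_eq a k, neg_mul a]
        gcongr
        exact (hS k hk).1
    _ ≤ Real.exp (-a * (L + w i * n)) * (D * (L + w i * n + 1) ^ Q) := by
        rw [← Finset.mul_sum]
        gcongr
        exact hshell _ (by positivity) S hS
    _ ≤ Real.exp (-a * (L + w i * n)) * (D * ((1 + w i) * (L + 1) * (n + 1)) ^ Q) := by gcongr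
    _ = _ := by
        rw [Real.mul_rpow (by positivity) (by positivity),
          Real.mul_rpow (by positivity) (by positivity), mul_add, Real.exp_add]
        ring_nf

theorem exists_sum_compl_simplex_le {a : ℝ} (ha : 0 < a) (hw : ∀ j, 0 < w j)
    (hδ : ∀ j, 0 ≤ δ j) (hp : ∀ j, 0 ≤ p j) (hi : δ i = 0) :
    ∃ C > (0 : ℝ), ∀ L : ℝ, 0 ≤ L → ∀ S : Finset (ι → ℕ),
      (∀ k ∈ S, L ≤ ∑ j, w j * (k j : ℝ)) →
      ∑ k ∈ S, ∏ j, Real.exp (-(a * w j + δ j) * k j) * ((k j : ℝ) + 1) ^ p j ≤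
        C * Real.exp (-a * L) * (L + 1) ^ (∑ j with δ j = 0, (p j + 1) - 1) := by
  obtain ⟨D, hD, hshell⟩ := exists_sum_exp_shell_le ha.le hw hδ hp hi
  set Q : ℝ := ∑ j with δ j = 0, (p j + 1) - 1
  have hseries := summable_exp_neg_mul_add_one_rpow (mul_pos ha (hw i)) Q
  refine ⟨D * ∑' n : ℕ, Real.exp (-(a * w i) * n) * ((n : ℝ) + 1) ^ Q,
    mul_pos hD (hseries.tsum_pos (fun n => by positivity) 0 (by positivity)),
    fun L hL S hS => ?_⟩
  set shell : (ι → ℕ) → ℕ := fun k => ⌊(∑ j, w j * (k j : ℝ) - L) / w i⌋₊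
  rw [← Finset.sum_fiberwise_of_maps_to (fun _ => Finset.mem_image_of_mem shell)]
  calc _ ≤ ∑ n ∈ S.image shell, D * Real.exp (-a * L) * (L + 1) ^ Q *
          (Real.exp (-(a * w i) * n) * ((n : ℝ) + 1) ^ Q) := by
        refine Finset.sum_le_sum fun n _ => hshell L hL n _ fun k hk => ?_
        obtain ⟨hkS, hkn⟩ := Finset.mem_filter.1 hk
        exact mem_Ico_of_floor_sub_div_eq (hw i) (hS k hkS) hkn
    _ ≤ D * Real.exp (-a * L) * (L + 1) ^ Q *
          ∑' n : ℕ, Real.exp (-(a * w i) * n) * ((n : ℝ) + 1) ^ Q := by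
        rw [← Finset.mul_sum]
        gcongr
        exact hseries.sum_le_tsum _ fun n _ => by positivity
    _ = _ := by ring

end Simplex

theorem div_one_add_mul_le_of_div_le {β γ ρ : ℝ} (hβ : 0 < β) (hρ : 0 < 1 + ρ)
    (h : γ / β ≤ ρ) : 1 / (1 + ρ) * (β + γ) ≤ β := by
  rw [div_le_iff₀ hβ] at h
  rw [one_div_mul_eq_div, div_le_iff₀ hρ]
  linarith

theorem sub_div_one_add_mul_eq_zero_iff {β γ ρ : ℝ} (hβ : β ≠ 0) (hρ : 1 + ρ ≠ 0) :
    β - 1 / (1 + ρ) * (β + γ) = 0 ↔ γ / β = ρ := by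
  rw [sub_eq_zero, one_div_mul_eq_div, eq_div_iff hρ, div_eq_iff hβ]
  constructor <;> intro h <;> linarith

theorem smolyak_simplex_error_bound_general
    {ι : Type*} [Fintype ι] {Y : Type*} [SeminormedAddCommGroup Y]
    (β β' γ : ι → ℝ)
    (hβ : ∀ j, 0 < β j) (hβ' : ∀ j, 0 ≤ β' j) (hβγ : ∀ j, 0 < β j + γ j)
    (ρ : ℝ) (hρmem : ∃ j, γ j / β j = ρ) (hρub : ∀ j, γ j / β j ≤ ρ) :
    ∃ C > (0 : ℝ), ∀ (K : ℝ) (u : (ι → ℕ) → Y),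
      (∀ k : ι → ℕ, ‖u k‖ ≤
        K * ∏ j, Real.exp (-β j * (k j : ℝ)) * ((k j : ℝ) + 1) ^ (β' j)) →
      ∀ s : Y, HasSum u s →
      ∀ L : ℝ, 0 ≤ L →
      ‖(∑' k : ι → ℕ, if ∑ j, (β j + γ j) * (k j : ℝ) ≤ L then u k else 0) - s‖ ≤
        K * C * Real.exp (-L / (1 + ρ)) *
          (L + 1) ^
            (((Finset.univ.filter fun j => γ j / β j = ρ).card : ℝ) - 1 +
              ∑ j ∈ Finset.univ.filter fun j => γ j / β j = ρ, β' j) := by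
  obtain ⟨i, hi⟩ := hρmem
  have hρ : 0 < 1 + ρ := by
    rw [← hi, one_add_div (hβ i).ne']
    exact div_pos (hβγ i) (hβ i)
  have hδ : ∀ j, β j - 1 / (1 + ρ) * (β j + γ j) = 0 ↔ γ j / β j = ρ := fun j =>
    sub_div_one_add_mul_eq_zero_iff (hβ j).ne' hρ.ne'
  obtain ⟨C, hC, hsum⟩ := exists_sum_compl_simplex_le (one_div_pos.2 hρ) hβγ
    (fun j => sub_nonneg.2 (div_one_add_mul_le_of_div_le (hβ j) hρ (hρub j))) hβ' ((hδ i).2 hi)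
  simp only [add_sub_cancel, hδ, Finset.sum_add_distrib, Finset.sum_const, nsmul_one] at hsum
  refine ⟨C, hC, fun K u hu s hs L hL => ?_⟩
  have hK : 0 ≤ K := by simpa using (norm_nonneg _).trans (hu 0)
  have hfin := finite_setOf_sum_mul_natCast_le hβγ L
  rw [tsum_eq_sum (s := hfin.toFinset) fun k hk => if_neg (by simpa using hk),
    Finset.sum_congr rfl fun k hk => if_pos (by simpa using hk)]
  refine norm_sum_sub_le_of_hasSum hs _ fun S hS => ?_
  have hSL : ∀ k ∈ S, L ≤ ∑ j, (β j + γ j) * (k j : ℝ) := fun k hk =>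
    (not_le.1 fun h => Finset.disjoint_right.1 hS hk (by simpa using h)).le
  calc _ ≤ K * ∑ k ∈ S, ∏ j, Real.exp (-β j * k j) * ((k j : ℝ) + 1) ^ β' j := by
        rw [Finset.mul_sum]
        exact Finset.sum_le_sum fun k _ => hu k
    _ ≤ K * _ := mul_le_mul_of_nonneg_left (hsum L hL S hSL) hK
    _ = _ := by ring_nf

/-- error bound for Smolyak's algorithm with simplex-type sets:
if `‖(Δ_mix M)(k)‖ ≤ ∏_j K_{j,1} exp(-β_j k_j)(k_j+1)^{β'_j}` and
`I_L = {k : ∑_j (β_j+γ_j)k_j ≤ L}`, then with `ρ = max_j γ_j/β_j`,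
`J = {j : γ_j/β_j = ρ}`, `d* = |J|`, `β'* = ∑_{j∈J} β'_j`, `K₁ = ∏_j K_{j,1}`,
there is `C = C(β,γ,β',d) > 0` with
`‖S_{I_L}(M) - M_∞‖ ≤ K₁ C exp(-L/(1+ρ)) (L+1)^{d*-1+β'*}` for all `L > 0`. -/
theorem smolyak_simplex_error_bound
    {d : ℕ} (hd : 1 ≤ d) {Y : Type*} [NormedAddCommGroup Y] [NormedSpace ℝ Y]
    [CompleteSpace Y]
    (β β' γ : Fin d → ℝ)
    (hβ : ∀ j, 0 < β j) (hβ' : ∀ j, 0 ≤ β' j) (hγ : ∀ j, 0 < γ j)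
    (ρ : ℝ) (hρmem : ∃ j, γ j / β j = ρ) (hρub : ∀ j, γ j / β j ≤ ρ) :
    ∃ C > (0 : ℝ), ∀ K1 : Fin d → ℝ, (∀ j, 0 < K1 j) →
      ∀ M : (Fin d → ℕ) → Y,
      (∀ k : Fin d → ℕ, ‖mixDiff M k‖ ≤
        ∏ j, K1 j * Real.exp (-β j * (k j : ℝ)) * ((k j : ℝ) + 1) ^ (β' j)) →
      ∀ Minf : Y, HasSum (mixDiff M) Minf →
      ∀ L : ℝ, 0 < L →
      ‖(∑' k : Fin d → ℕ,
          if ∑ j, (β j + γ j) * (k j : ℝ) ≤ L then mixDiff M k else 0) - Minf‖ ≤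
        (∏ j, K1 j) * C * Real.exp (-L / (1 + ρ)) *
          (L + 1) ^
            (((Finset.univ.filter fun j => γ j / β j = ρ).card : ℝ) - 1 +
              ∑ j ∈ Finset.univ.filter fun j => γ j / β j = ρ, β' j) := by
  obtain ⟨C, hC, h⟩ := smolyak_simplex_error_bound_general (Y := Y) β β' γ hβ hβ'
    (fun j => add_pos (hβ j) (hγ j)) ρ hρmem hρub
  exact ⟨C, hC, fun K1 _ M hM Minf hMinf L hL => h (∏ j, K1 j) (mixDiff M)
    (by simpa only [Finset.prod_mul_distrib, mul_assoc] using hM) Minf hMinf L hL.le⟩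
end
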